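/- Assume θ*_{k1} ∈ [0, π/2] for all k. Then for every v ∈ ℝ^{2N} it holds that vᵀ P 𝓛 P v ≥ (1/2)(v*_min²/v*_max²) λ₂(L) ‖v‖_S², where P = I_{2N} − 𝐒𝐒ᵀ, ‖v‖_S is the Euclidean distance of v to the subspace S = range(𝐒), v*_min := min_k v*_k, v*_max := max_k v*_k, and λ₂(L) is the second smallest eigenvalue of L. -/

import Mathlib

noncomputable section

open Real Matrix MeasureTheory Metric
open scoped BigOperators

/-- ℝ² with the Euclidean norm. -/
abbrev E2 : Type := EuclideanSpace ℝ (Fin 2)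

/-- The state space ℝ^{2N}: N blocks of ℝ², with the Euclidean norm. -/
abbrev St (N : ℕ) : Type := EuclideanSpace ℝ (Fin N × Fin 2)

/-- The 2×2 rotation matrix R(θ). -/
def Rot (θ : ℝ) : Matrix (Fin 2) (Fin 2) ℝ :=
  !![Real.cos θ, -Real.sin θ; Real.sin θ, Real.cos θ]

def toE2 (x : Fin 2 → ℝ) : E2 := (WithLp.equiv 2 (Fin 2 → ℝ)).symm x
def ofE2 (x : E2) : Fin 2 → ℝ := WithLp.equiv 2 (Fin 2 → ℝ) x
def toSt {N : ℕ} (x : Fin N × Fin 2 → ℝ) : St N :=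
  (WithLp.equiv 2 (Fin N × Fin 2 → ℝ)).symm x
def ofSt {N : ℕ} (v : St N) : Fin N × Fin 2 → ℝ := WithLp.equiv 2 (Fin N × Fin 2 → ℝ) v

/-- The k-th ℝ²-block of a state vector. -/
def blk {N : ℕ} (v : St N) (k : Fin N) : E2 := toE2 fun i => ofSt v (k, i)

/-- Action of a 2×2 matrix on ℝ². -/
def act2 (M : Matrix (Fin 2) (Fin 2) ℝ) (x : E2) : E2 := toE2 (M.mulVec (ofE2 x))

/-- Action of a 2N×2N matrix on the state space. -/
def act {N : ℕ} (M : Matrix (Fin N × Fin 2) (Fin N × Fin 2) ℝ) (v : St N) : St N :=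
  toSt (M.mulVec (ofSt v))

/-- Block-diagonal 2N×2N matrix built from N 2×2 blocks. -/
def blockDiag {N : ℕ} (d : Fin N → Matrix (Fin 2) (Fin 2) ℝ) :
    Matrix (Fin N × Fin 2) (Fin N × Fin 2) ℝ :=
  Matrix.of fun p q => if p.1 = q.1 then d p.1 p.2 q.2 else 0

/-- 𝓙 = I_N ⊗ J where J = R(π/2). -/
def Jbig (N : ℕ) : Matrix (Fin N × Fin 2) (Fin N × Fin 2) ℝ :=
  blockDiag fun _ => Rot (π / 2)

/-- The weighted graph Laplacian L (with the convention w k k = 0). -/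
def lapMat {N : ℕ} (w : Fin N → Fin N → ℝ) : Matrix (Fin N) (Fin N) ℝ :=
  Matrix.of fun k j => if k = j then ∑ l, w k l else -(w k j)

/-- 𝓛 = L ⊗ I₂. -/
def Lbig {N : ℕ} (w : Fin N → Fin N → ℝ) : Matrix (Fin N × Fin 2) (Fin N × Fin 2) ℝ :=
  Matrix.of fun p q => lapMat w p.1 q.1 * (if p.2 = q.2 then 1 else 0)

/-- K_k = Σ_j w_{jk} (I₂ − (v*_j/v*_k) R(θ*_{jk})). -/
def Kmat {N : ℕ} (w : Fin N → Fin N → ℝ) (vst θs : Fin N → ℝ) (k : Fin N) :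
    Matrix (Fin 2) (Fin 2) ℝ :=
  ∑ j, w j k • ((1 : Matrix (Fin 2) (Fin 2) ℝ) - (vst j / vst k) • Rot (θs j - θs k))

/-- 𝓚 = blockdiag(K₁,…,K_N). -/
def Kbig {N : ℕ} (w : Fin N → Fin N → ℝ) (vst θs : Fin N → ℝ) :
    Matrix (Fin N × Fin 2) (Fin N × Fin 2) ℝ :=
  blockDiag (Kmat w vst θs)

/-- The diagonal matrix Φ(v) = blockdiag(Φ_k(v_k) I₂). -/
def PhiMat {N : ℕ} (vst : Fin N → ℝ) (v : St N) :
    Matrix (Fin N × Fin 2) (Fin N × Fin 2) ℝ :=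
  Matrix.diagonal fun p => (vst p.1 - ‖blk v p.1‖) / vst p.1

/-- The closed-loop vector field f(v) = (ω₀𝓙 + η(𝓚 − 𝓛) + αΦ(v))v. -/
def fcl {N : ℕ} (w : Fin N → Fin N → ℝ) (vst θs : Fin N → ℝ) (ω₀ η α : ℝ) (v : St N) :
    St N :=
  act (ω₀ • Jbig N + η • (Kbig w vst θs - Lbig w) + α • PhiMat vst v) v

/-- The rotating-frame vector field f̄(v̄) = η(𝓚 − 𝓛)v̄ + αΦ(v̄)v̄. -/
def fbar {N : ℕ} (w : Fin N → Fin N → ℝ) (vst θs : Fin N → ℝ) (η α : ℝ) (v : St N) :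
    St N :=
  act (η • (Kbig w vst θs - Lbig w) + α • PhiMat vst v) v

/-- v : ℝ → St N is a (global) solution of dx/dt = g(x). -/
def IsSol {N : ℕ} (g : St N → St N) (v : ℝ → St N) : Prop :=
  ∀ t : ℝ, HasDerivAt v (g (v t)) t

/-- The set S of states with the prescribed relative phase angles (and magnitude ratios). -/
def Sset {N : ℕ} [NeZero N] (vst θs : Fin N → ℝ) : Set (St N) :=
  {v | ∀ k, (vst k)⁻¹ • blk v k = act2 (Rot (θs k)) ((vst 0)⁻¹ • blk v 0)}

/-- The set A of states with the prescribed magnitudes. -/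
def Aset {N : ℕ} (vst : Fin N → ℝ) : Set (St N) :=
  {v | ∀ k, ‖blk v k‖ = vst k}

/-- The set F_{g,ω} of synchronous points: g(v) = ω𝓙v. -/
def Fset {N : ℕ} (g : St N → St N) (ω : ℝ) : Set (St N) :=
  {v | g v = ω • act (Jbig N) v}

/-- The target set T_{g,ω} = S ∩ F_{g,ω} ∩ A. -/
def Tset {N : ℕ} [NeZero N] (vst θs : Fin N → ℝ) (g : St N → St N) (ω : ℝ) : Set (St N) :=
  Sset vst θs ∩ Fset g ω ∩ Aset vst

/-- The second-smallest eigenvalue of a graph Laplacian, via the Courant–Fischer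
characterization: the minimum of the Rayleigh quotient over unit vectors orthogonal to
the all-ones vector (an eigenvector for the smallest eigenvalue 0 of a Laplacian). -/
def lambda2 {N : ℕ} (L : Matrix (Fin N) (Fin N) ℝ) : ℝ :=
  sInf {r | ∃ x : Fin N → ℝ, (∑ k, x k ^ 2) = 1 ∧ (∑ k, x k) = 0 ∧ r = x ⬝ᵥ L.mulVec x}

/-- The simple graph with an edge between j ≠ k whenever w j k ≠ 0. -/
def wGraph {N : ℕ} (w : Fin N → Fin N → ℝ) : SimpleGraph (Fin N) :=
  SimpleGraph.fromRel fun j k => w j k ≠ 0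

/-- Condition 1 (the stability condition). -/
def Cond1 {N : ℕ} (w : Fin N → Fin N → ℝ) (vst θs : Fin N → ℝ) (η α : ℝ) : Prop :=
  (∀ k, θs k ∈ Set.Icc (0 : ℝ) (π / 2)) ∧
  (⨆ k, ∑ j, w j k * |1 - vst j / vst k * Real.cos (θs j - θs k)|) + α / η
    < 1 / 2 * ((⨅ k, vst k) ^ 2 / (⨆ k, vst k) ^ 2) * lambda2 (lapMat w)

/-- The 2N×2 matrix 𝐒 with k-th block v*_k R(θ*_{k1}), normalized so that 𝐒ᵀ𝐒 = I₂. -/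
def Smat {N : ℕ} (vst θs : Fin N → ℝ) : Matrix (Fin N × Fin 2) (Fin 2) ℝ :=
  Matrix.of fun p i => (Real.sqrt (∑ n, vst n ^ 2))⁻¹ * (vst p.1 * Rot (θs p.1) p.2 i)

/-- P = I − 𝐒𝐒ᵀ, the orthogonal projector onto the orthogonal complement of range 𝐒. -/
def Pmat {N : ℕ} (vst θs : Fin N → ℝ) : Matrix (Fin N × Fin 2) (Fin N × Fin 2) ℝ :=
  1 - Smat vst θs * (Smat vst θs)ᵀ

/-- The subspace S, realized as the range of 𝐒. -/
def SsetR {N : ℕ} (vst θs : Fin N → ℝ) : Set (St N) :=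
  {v | ∃ c : Fin 2 → ℝ, v = toSt ((Smat vst θs).mulVec c)}

/-- The quadratic form vᵀ M v. -/
def qf {N : ℕ} (M : Matrix (Fin N × Fin 2) (Fin N × Fin 2) ℝ) (v : St N) : ℝ :=
  ofSt v ⬝ᵥ M.mulVec (ofSt v)

/-- The largest singular value of a matrix: its ℓ² → ℓ² operator norm. -/
def sigmaMax {N : ℕ} (M : Matrix (Fin N × Fin 2) (Fin N × Fin 2) ℝ) : ℝ :=
  ‖LinearMap.toContinuousLinearMap (Matrix.toEuclideanLin M)‖

/-!
Identify `ℝ^{2N}` with `ℂ^N`. The range of `𝐒` becomes the complex line through the set-point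
phasor `s = (v*_k e^{iθ*_k})_k`, `P` the projection onto its orthogonal complement, and `𝓛` the
Laplacian acting separately on real and imaginary parts. Let `z` be the phasor of `P v`, so `z ⟂ s`.
Bessel's inequality for the all-ones vector against the orthogonal pair `s, z` reads
`cos²∠(1, s) + cos²∠(1, z) ≤ 1`, so the component of `z` orthogonal to `1`, on which `𝓛 ≥ λ₂`,
has squared norm at least `cos²∠(1, s) ‖z‖²`. This gives the estimate for arbitrary angles with
constant `cos²∠(1, s)`. If all angles lie in `[0, π/2]`, then `re s_k + im s_k ≥ v*_k`, and
this constant is at least `v*_min² / (2 v*_max²)`.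
-/

section Coherence

variable {𝕜 E ι : Type*} [RCLike 𝕜] [Fintype ι]

lemma sq_norm_inner_mul_add_sq_norm_inner_mul_le_of_inner_eq_zero
    [NormedAddCommGroup E] [InnerProductSpace 𝕜 E] {u z : E} (huz : inner 𝕜 u z = 0) (e : E) :
    ‖inner 𝕜 u e‖ ^ 2 * ‖z‖ ^ 2 + ‖inner 𝕜 z e‖ ^ 2 * ‖u‖ ^ 2 ≤ ‖e‖ ^ 2 * (‖u‖ ^ 2 * ‖z‖ ^ 2) := by
  obtain rfl | hu := eq_or_ne u 0
  · simp
  obtain rfl | hz := eq_or_ne z 0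
  · simp
  have horth : Orthonormal 𝕜 ![(‖u‖⁻¹ : 𝕜) • u, (‖z‖⁻¹ : 𝕜) • z] := by
    rw [orthonormal_vecCons_iff]
    simp [norm_smul, inner_smul_left, inner_smul_right, huz, hu, hz]
  have hbessel := horth.sum_inner_products_le (x := e) (s := Finset.univ)
  simp only [Fin.sum_univ_two, cons_val_zero, cons_val_one, inner_smul_left, norm_mul, map_inv₀,
    RCLike.conj_ofReal, norm_inv, RCLike.norm_ofReal, abs_norm] at hbessel
  calc
    _ = ((‖u‖⁻¹ * ‖inner 𝕜 u e‖) ^ 2 + (‖z‖⁻¹ * ‖inner 𝕜 z e‖) ^ 2) * (‖u‖ ^ 2 * ‖z‖ ^ 2) := by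
      field_simp
    _ ≤ _ := by gcongr

/-- The squared cosine of the angle between `s` and the all-ones vector. It is `1` if all
coordinates of `s` agree, and has the junk value `0` at `s = 0`. -/
def coherence (s : EuclideanSpace 𝕜 ι) : ℝ :=
  ‖∑ k, s k‖ ^ 2 / (Fintype.card ι * ‖s‖ ^ 2)

lemma coherence_nonneg (s : EuclideanSpace 𝕜 ι) : 0 ≤ coherence s := by
  unfold coherence
  positivity

lemma coherence_mul_sq_norm_le [Nonempty ι] {s z : EuclideanSpace 𝕜 ι} (hs : s ≠ 0)
    (hsz : inner 𝕜 s z = 0) :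
    coherence s * ‖z‖ ^ 2 ≤ ‖z‖ ^ 2 - ‖∑ k, z k‖ ^ 2 / Fintype.card ι := by
  have : (0 : ℝ) < Fintype.card ι := by exact_mod_cast Fintype.card_pos
  have : 0 < ‖s‖ := norm_pos_iff.2 hs
  let ones : EuclideanSpace 𝕜 ι := WithLp.toLp 2 1
  have norm_inner_ones (x : EuclideanSpace 𝕜 ι) : ‖inner 𝕜 x ones‖ = ‖∑ k, x k‖ := by
    rw [norm_inner_symm]
    simp [ones, PiLp.inner_apply]
  have sq_norm_ones : ‖ones‖ ^ 2 = Fintype.card ι := by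
    simp [ones, EuclideanSpace.norm_sq_eq]
  have hbessel := sq_norm_inner_mul_add_sq_norm_inner_mul_le_of_inner_eq_zero hsz ones
  rw [norm_inner_ones, norm_inner_ones, sq_norm_ones] at hbessel
  rw [coherence, le_sub_iff_add_le]
  field_simp
  linarith

lemma half_mul_sq_div_sq_le_coherence [Nonempty ι] {s : EuclideanSpace ℂ ι} {m M : ℝ}
    (hm : 0 < m) (hs_ge : ∀ k, m ≤ (s k).re + (s k).im) (hs_le : ∀ k, ‖s k‖ ≤ M) :
    1 / 2 * (m ^ 2 / M ^ 2) ≤ coherence s := by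
  have : (0 : ℝ) < Fintype.card ι := by exact_mod_cast Fintype.card_pos
  have hs : 0 < ‖s‖ := by
    obtain ⟨k⟩ := ‹Nonempty ι›
    refine norm_pos_iff.2 fun h ↦ hm.not_ge ?_
    simpa [h] using hs_ge k
  have sq_norm_le : ‖s‖ ^ 2 ≤ Fintype.card ι * M ^ 2 := by
    rw [EuclideanSpace.norm_sq_eq, ← nsmul_eq_mul]
    exact Finset.sum_le_card_nsmul _ _ _ fun k _ ↦ pow_le_pow_left₀ (norm_nonneg _) (hs_le k) 2
  have le_re_add_im : Fintype.card ι * m ≤ (∑ k, s k).re + (∑ k, s k).im := by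
    rw [Complex.re_sum, Complex.im_sum, ← Finset.sum_add_distrib, ← nsmul_eq_mul]
    exact Finset.card_nsmul_le_sum _ _ _ fun k _ ↦ hs_ge k
  have le_sq_norm_sum : (Fintype.card ι * m) ^ 2 / 2 ≤ ‖∑ k, s k‖ ^ 2 := by
    rw [← Complex.normSq_eq_norm_sq, Complex.normSq_apply]
    have := (pow_le_pow_left₀ (by positivity) le_re_add_im 2).trans add_sq_le
    linarith
  calc
    1 / 2 * (m ^ 2 / M ^ 2)
      = (Fintype.card ι * m) ^ 2 / 2 / (Fintype.card ι * (Fintype.card ι * M ^ 2)) := by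
        field_simp
    _ ≤ coherence s := by
        unfold coherence
        gcongr

end Coherence

section SecondEigenvalue

variable {N : ℕ} {L : Matrix (Fin N) (Fin N) ℝ}

lemma lambda2_nonneg (hL : L.PosSemidef) : 0 ≤ lambda2 L := by
  apply Real.sInf_nonneg
  rintro _ ⟨x, -, -, rfl⟩
  exact hL.dotProduct_mulVec_nonneg x

lemma lambda2_mul_sum_sq_le_of_sum_eq_zero (hL : L.PosSemidef) {x : Fin N → ℝ}
    (hx : ∑ k, x k = 0) : lambda2 L * ∑ k, x k ^ 2 ≤ x ⬝ᵥ L *ᵥ x := by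
  obtain hzero | hpos := (Finset.sum_nonneg fun k _ ↦ sq_nonneg (x k)).eq_or_lt
  · rw [← hzero, mul_zero]
    exact hL.dotProduct_mulVec_nonneg x
  set r := √(∑ k, x k ^ 2)
  have hr : r ^ 2 = ∑ k, x k ^ 2 := Real.sq_sqrt hpos.le
  have hr_pos : 0 < r := Real.sqrt_pos.2 hpos
  have hbdd : BddBelow {q | ∃ y : Fin N → ℝ, (∑ k, y k ^ 2) = 1 ∧ (∑ k, y k) = 0 ∧
      q = y ⬝ᵥ L *ᵥ y} := by
    refine ⟨0, ?_⟩
    rintro _ ⟨y, -, -, rfl⟩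
    exact hL.dotProduct_mulVec_nonneg y
  have hunit : lambda2 L ≤ (r⁻¹ • x) ⬝ᵥ L *ᵥ (r⁻¹ • x) := by
    refine csInf_le hbdd ⟨r⁻¹ • x, ?_, ?_, rfl⟩
    · simp only [Pi.smul_apply, smul_eq_mul, mul_pow, ← Finset.mul_sum, ← hr]
      field_simp
    · simp only [Pi.smul_apply, ← Finset.smul_sum, hx, smul_zero]
  calc
    lambda2 L * ∑ k, x k ^ 2 ≤ (r⁻¹ • x) ⬝ᵥ L *ᵥ (r⁻¹ • x) * r ^ 2 := by
      rw [hr]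
      gcongr
    _ = x ⬝ᵥ L *ᵥ x := by
      simp only [mulVec_smul, dotProduct_smul, smul_dotProduct, smul_eq_mul]
      field_simp

lemma lambda2_mul_sum_sq_sub_le [NeZero N] (hL : L.PosSemidef) (hL_one : L *ᵥ 1 = 0)
    (x : Fin N → ℝ) :
    lambda2 L * (∑ k, x k ^ 2 - (∑ k, x k) ^ 2 / N) ≤ x ⬝ᵥ L *ᵥ x := by
  have hN : (N : ℝ) ≠ 0 := NeZero.ne _
  set mean := (∑ k, x k) / N with hmean
  set y : Fin N → ℝ := x - mean • 1 with hy
  have y_apply (k : Fin N) : y k = x k - mean := by simp [hy]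
  have sum_y : ∑ k, y k = 0 := by
    simp [y_apply, hmean, mul_div_cancel₀ _ hN]
  have sum_sq_y : ∑ k, y k ^ 2 = ∑ k, x k ^ 2 - (∑ k, x k) ^ 2 / N := by
    simp only [y_apply, sub_sq, Finset.sum_add_distrib, Finset.sum_sub_distrib, ← Finset.sum_mul,
      ← Finset.mul_sum, Finset.sum_const, Finset.card_univ, Fintype.card_fin, nsmul_eq_mul, hmean]
    field_simp
    ring
  have one_dotProduct : 1 ⬝ᵥ L *ᵥ x = 0 := by
    rw [dotProduct_mulVec, ← mulVec_transpose, ← conjTranspose_eq_transpose_of_trivial,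
      hL.isHermitian.eq, hL_one, zero_dotProduct]
  have form_y : y ⬝ᵥ L *ᵥ y = x ⬝ᵥ L *ᵥ x := by
    simp [hy, mulVec_sub, mulVec_smul, hL_one, sub_dotProduct, one_dotProduct]
  rw [← sum_sq_y, ← form_y]
  exact lambda2_mul_sum_sq_le_of_sum_eq_zero hL sum_y

lemma lambda2_mul_sq_norm_sub_le [NeZero N] (hL : L.PosSemidef) (hL_one : L *ᵥ 1 = 0)
    (z : EuclideanSpace ℂ (Fin N)) :
    lambda2 L * (‖z‖ ^ 2 - ‖∑ k, z k‖ ^ 2 / N) ≤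
      (fun k ↦ (z k).re) ⬝ᵥ L *ᵥ (fun k ↦ (z k).re) +
        (fun k ↦ (z k).im) ⬝ᵥ L *ᵥ (fun k ↦ (z k).im) := by
  have hre := lambda2_mul_sum_sq_sub_le hL hL_one fun k ↦ (z k).re
  have him := lambda2_mul_sum_sq_sub_le hL hL_one fun k ↦ (z k).im
  have hsplit : ‖z‖ ^ 2 - ‖∑ k, z k‖ ^ 2 / N =
      (∑ k, (z k).re ^ 2 - (∑ k, (z k).re) ^ 2 / N) +
        (∑ k, (z k).im ^ 2 - (∑ k, (z k).im) ^ 2 / N) := by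
    simp only [EuclideanSpace.norm_sq_eq, ← Complex.normSq_eq_norm_sq, Complex.normSq_apply,
      Complex.re_sum, Complex.im_sum, Finset.sum_add_distrib]
    ring_nf
  rw [hsplit, mul_add]
  exact add_le_add hre him

end SecondEigenvalue

section Laplacian

variable {N : ℕ} {w : Fin N → Fin N → ℝ}

lemma lapMat_mulVec_apply (hw_irrefl : ∀ k, w k k = 0) (x : Fin N → ℝ) (k : Fin N) :
    (lapMat w *ᵥ x) k = ∑ j, w k j * (x k - x j) := by
  have entry (j : Fin N) :
      lapMat w k j * x j = (if k = j then (∑ l, w k l) * x k else 0) - w k j * x j := by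
    by_cases hkj : k = j
    · subst hkj
      simp [lapMat, hw_irrefl]
    · simp [lapMat, hkj]
  simp [mulVec, dotProduct, entry, mul_sub, Finset.sum_mul]

lemma dotProduct_lapMat_mulVec (hw_symm : ∀ j k, w j k = w k j) (hw_irrefl : ∀ k, w k k = 0)
    (x : Fin N → ℝ) :
    x ⬝ᵥ lapMat w *ᵥ x = 1 / 2 * ∑ k, ∑ j, w k j * (x k - x j) ^ 2 := by
  have hform : x ⬝ᵥ lapMat w *ᵥ x = ∑ k, ∑ j, x k * (w k j * (x k - x j)) := by
    simp only [dotProduct, lapMat_mulVec_apply hw_irrefl, Finset.mul_sum]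
  have hswap : ∑ k, ∑ j, x k * (w k j * (x k - x j)) =
      ∑ k, ∑ j, x j * (w k j * (x j - x k)) := by
    rw [Finset.sum_comm]
    simp only [hw_symm]
  have hsum : ∑ k, ∑ j, w k j * (x k - x j) ^ 2 =
      ∑ k, ∑ j, x k * (w k j * (x k - x j)) + ∑ k, ∑ j, x j * (w k j * (x j - x k)) := by
    simp only [← Finset.sum_add_distrib]
    congr! 2
    ring
  rw [hsum, ← hswap, ← hform]
  ring

lemma lapMat_posSemidef (hw_symm : ∀ j k, w j k = w k j) (hw_nonneg : ∀ j k, 0 ≤ w j k)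
    (hw_irrefl : ∀ k, w k k = 0) : (lapMat w).PosSemidef := by
  refine .of_dotProduct_mulVec_nonneg ?_ fun x ↦ ?_
  · ext j k
    by_cases hjk : j = k
    · simp [hjk]
    · simp [lapMat, hjk, Ne.symm hjk, hw_symm k j]
  · rw [star_trivial, dotProduct_lapMat_mulVec hw_symm hw_irrefl]
    exact mul_nonneg one_half_pos.le <| Finset.sum_nonneg fun k _ ↦ Finset.sum_nonneg fun j _ ↦
      mul_nonneg (hw_nonneg k j) (sq_nonneg _)

lemma lapMat_mulVec_one (hw_irrefl : ∀ k, w k k = 0) : lapMat w *ᵥ 1 = 0 := by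
  ext k
  simp [lapMat_mulVec_apply hw_irrefl]

end Laplacian

section Phasor

variable {N : ℕ} {w : Fin N → Fin N → ℝ} {vst θs : Fin N → ℝ}

/-- The identification of `ℝ^{2N}` with `ℂ^N`, sending each `ℝ²`-block to its complex number. -/
def phasor : St N →ₗᵢ[ℝ] EuclideanSpace ℂ (Fin N) where
  toFun v := WithLp.toLp 2 fun k ↦ ⟨v (k, 0), v (k, 1)⟩
  map_add' _ _ := by ext k; apply Complex.ext <;> simp
  map_smul' _ _ := by ext k; apply Complex.ext <;> simp
  norm_map' v := by
    rw [← sq_eq_sq₀ (norm_nonneg _) (norm_nonneg _)]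
    change ‖WithLp.toLp 2 _‖ ^ 2 = ‖v‖ ^ 2
    simp [EuclideanSpace.norm_sq_eq, ← Complex.normSq_eq_norm_sq, Complex.normSq_apply,
      Fintype.sum_prod_type, ← sq]

lemma phasor_apply (v : St N) (k : Fin N) : phasor v k = ⟨v (k, 0), v (k, 1)⟩ := rfl

/-- The vector of set-point phasors `v*_k e^{iθ*_k}`; it spans the complex line that
corresponds to the range of `𝐒`. -/
def setpoint (vst θs : Fin N → ℝ) : EuclideanSpace ℂ (Fin N) :=
  WithLp.toLp 2 fun k ↦ vst k * Complex.exp (θs k * Complex.I)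

lemma setpoint_apply (k : Fin N) :
    setpoint vst θs k = ⟨vst k * cos (θs k), vst k * sin (θs k)⟩ := by
  apply Complex.ext <;> simp [setpoint, Complex.exp_ofReal_mul_I_re, Complex.exp_ofReal_mul_I_im]

lemma norm_setpoint_apply (k : Fin N) : ‖setpoint vst θs k‖ = |vst k| := by
  simp [setpoint, Complex.norm_exp_ofReal_mul_I]

lemma norm_setpoint : ‖setpoint vst θs‖ = √(∑ k, vst k ^ 2) := by
  simp [EuclideanSpace.norm_eq, norm_setpoint_apply]

lemma setpoint_ne_zero (hvst : vst ≠ 0) (θs : Fin N → ℝ) : setpoint vst θs ≠ 0 := by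
  obtain ⟨k, hk⟩ := Function.ne_iff.1 hvst
  intro hzero
  exact hk (by simpa [hzero, eq_comm] using norm_setpoint_apply (vst := vst) (θs := θs) k)

lemma qf_Lbig (v : St N) :
    qf (Lbig w) v = (fun k ↦ (phasor v k).re) ⬝ᵥ lapMat w *ᵥ (fun k ↦ (phasor v k).re) +
      (fun k ↦ (phasor v k).im) ⬝ᵥ lapMat w *ᵥ (fun k ↦ (phasor v k).im) := by
  simp [qf, ofSt, dotProduct, mulVec, Fintype.sum_prod_type, Lbig, phasor_apply,
    Finset.sum_add_distrib]

lemma qf_mul_mul_of_isSymm {P : Matrix (Fin N × Fin 2) (Fin N × Fin 2) ℝ} (hP : P.IsSymm)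
    (M : Matrix (Fin N × Fin 2) (Fin N × Fin 2) ℝ) (v : St N) :
    qf (P * M * P) v = qf M (act P v) := by
  change ofSt v ⬝ᵥ (P * M * P) *ᵥ ofSt v = (P *ᵥ ofSt v) ⬝ᵥ M *ᵥ (P *ᵥ ofSt v)
  rw [Matrix.mul_assoc, ← mulVec_mulVec, ← mulVec_mulVec, dotProduct_mulVec, ← mulVec_transpose,
    hP.eq]

lemma Pmat_isSymm : (Pmat vst θs).IsSymm := by
  simp [Matrix.IsSymm, Pmat, transpose_sub, transpose_mul]

lemma act_Pmat (v : St N) :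
    act (Pmat vst θs) v = v - toSt (Smat vst θs *ᵥ ((Smat vst θs)ᵀ *ᵥ ofSt v)) := by
  simp only [act, Pmat, sub_mulVec, one_mulVec, mulVec_mulVec]
  rfl

lemma infDist_SsetR_le_norm_act_Pmat (v : St N) :
    infDist v (SsetR vst θs) ≤ ‖act (Pmat vst θs) v‖ := by
  rw [act_Pmat, ← dist_eq_norm]
  exact infDist_le_dist_of_mem ⟨_, rfl⟩

lemma phasor_Smat_mulVec (c : Fin 2 → ℝ) :
    phasor (toSt (Smat vst θs *ᵥ c)) =
      ((‖setpoint vst θs‖⁻¹ : ℂ) * ⟨c 0, c 1⟩) • setpoint vst θs := by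
  ext k
  rw [norm_setpoint, PiLp.smul_apply, setpoint_apply, phasor_apply, ← Complex.ofReal_inv]
  apply Complex.ext <;>
  · simp only [toSt, Smat, Rot, mulVec, dotProduct, of_apply, cons_val', cons_val_fin_one,
      cons_val_zero, cons_val_one, Fin.sum_univ_two, WithLp.equiv_symm_apply, smul_eq_mul,
      Complex.mul_re, Complex.mul_im, Complex.ofReal_re, Complex.ofReal_im]
    ring

lemma Smat_transpose_mulVec (v : St N) :
    (⟨((Smat vst θs)ᵀ *ᵥ ofSt v) 0, ((Smat vst θs)ᵀ *ᵥ ofSt v) 1⟩ : ℂ) =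
      (‖setpoint vst θs‖⁻¹ : ℂ) * inner ℂ (setpoint vst θs) (phasor v) := by
  rw [norm_setpoint, PiLp.inner_apply, ← Complex.ofReal_inv, Finset.mul_sum]
  apply Complex.ext <;>
  · simp only [mulVec, dotProduct, Fintype.sum_prod_type, Complex.re_sum, Complex.im_sum]
    congr! 1 with k
    simp only [setpoint_apply, phasor_apply, ofSt, Smat, Rot, transpose_apply, of_apply, cons_val',
      cons_val_fin_one, cons_val_zero, cons_val_one, Fin.sum_univ_two, WithLp.equiv_apply,
      RCLike.inner_apply, Complex.ofReal_re, Complex.ofReal_im, Complex.mul_re,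
      Complex.mul_im, Complex.conj_re, Complex.conj_im]
    ring

lemma phasor_act_Pmat (v : St N) :
    phasor (act (Pmat vst θs) v) = phasor v -
      (inner ℂ (setpoint vst θs) (phasor v) / ‖setpoint vst θs‖ ^ 2 : ℂ) • setpoint vst θs := by
  rw [act_Pmat, map_sub, phasor_Smat_mulVec, Smat_transpose_mulVec]
  congr 2
  ring

lemma inner_setpoint_phasor_act_Pmat (hvst : vst ≠ 0) (v : St N) :
    inner ℂ (setpoint vst θs) (phasor (act (Pmat vst θs) v)) = 0 := by
  have hs : (‖setpoint vst θs‖ : ℂ) ≠ 0 := by simpa using setpoint_ne_zero hvst θs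
  rw [phasor_act_Pmat, inner_sub_right, inner_smul_right, inner_self_eq_norm_sq_to_K]
  simp [div_mul_cancel₀ _ (pow_ne_zero 2 hs)]

end Phasor

lemma one_le_cos_add_sin {θ : ℝ} (hθ : θ ∈ Set.Icc 0 (π / 2)) : 1 ≤ cos θ + sin θ := by
  have hcos : 0 ≤ cos θ := cos_nonneg_of_mem_Icc ⟨by linarith [hθ.1, pi_pos], hθ.2⟩
  have hsin : 0 ≤ sin θ := sin_nonneg_of_mem_Icc ⟨hθ.1, by linarith [hθ.2, pi_pos]⟩
  nlinarith [sin_sq_add_cos_sq θ, mul_nonneg hcos hsin]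

lemma half_mul_sq_iInf_div_sq_iSup_le_coherence_setpoint {N : ℕ} [NeZero N] {vst θs : Fin N → ℝ}
    (hvst : ∀ k, 0 < vst k) (hθ : ∀ k, θs k ∈ Set.Icc 0 (π / 2)) :
    1 / 2 * ((⨅ k, vst k) ^ 2 / (⨆ k, vst k) ^ 2) ≤ coherence (setpoint vst θs) := by
  refine half_mul_sq_div_sq_le_coherence ?_ (fun k ↦ ?_) fun k ↦ ?_
  · obtain ⟨k, hk⟩ := exists_eq_ciInf_of_finite (f := vst)
    exact hk ▸ hvst k
  · calc
      ⨅ k, vst k ≤ vst k := ciInf_le (Set.finite_range vst).bddBelow k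
      _ ≤ vst k * (cos (θs k) + sin (θs k)) :=
        le_mul_of_one_le_right (hvst k).le (one_le_cos_add_sin (hθ k))
      _ = (setpoint vst θs k).re + (setpoint vst θs k).im := by rw [setpoint_apply, mul_add]
  · rw [norm_setpoint_apply, abs_of_pos (hvst k)]
    exact le_ciSup (Set.finite_range vst).bddAbove k

theorem stmt10_general {N : ℕ} {w : Fin N → Fin N → ℝ} (hw_symm : ∀ j k, w j k = w k j)
    (hw_nonneg : ∀ j k, 0 ≤ w j k) (hw_irrefl : ∀ k, w k k = 0)
    {vst : Fin N → ℝ} (hvst : vst ≠ 0) (θs : Fin N → ℝ) (v : St N) :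
    coherence (setpoint vst θs) * lambda2 (lapMat w) * infDist v (SsetR vst θs) ^ 2
      ≤ qf (Pmat vst θs * Lbig w * Pmat vst θs) v := by
  have : NeZero N := ⟨by rintro rfl; exact hvst (Subsingleton.elim _ _)⟩
  have hL := lapMat_posSemidef hw_symm hw_nonneg hw_irrefl
  have hlambda := lambda2_nonneg hL
  have hcoh := coherence_nonneg (setpoint vst θs)
  set z := phasor (act (Pmat vst θs) v)
  have hdist : infDist v (SsetR vst θs) ≤ ‖z‖ :=
    (infDist_SsetR_le_norm_act_Pmat v).trans_eq (phasor.norm_map _).symm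
  have hcoherence : coherence (setpoint vst θs) * ‖z‖ ^ 2 ≤ ‖z‖ ^ 2 - ‖∑ k, z k‖ ^ 2 / N := by
    have := coherence_mul_sq_norm_le (setpoint_ne_zero hvst θs)
      (inner_setpoint_phasor_act_Pmat hvst v)
    rwa [Fintype.card_fin] at this
  calc
    coherence (setpoint vst θs) * lambda2 (lapMat w) * infDist v (SsetR vst θs) ^ 2
      ≤ coherence (setpoint vst θs) * lambda2 (lapMat w) * ‖z‖ ^ 2 := by
        gcongr
        exact infDist_nonneg
    _ = lambda2 (lapMat w) * (coherence (setpoint vst θs) * ‖z‖ ^ 2) := by ring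
    _ ≤ lambda2 (lapMat w) * (‖z‖ ^ 2 - ‖∑ k, z k‖ ^ 2 / N) := by gcongr
    _ ≤ qf (Lbig w) (act (Pmat vst θs) v) := by
        rw [qf_Lbig]
        exact lambda2_mul_sq_norm_sub_le hL (lapMat_mulVec_one hw_irrefl) z
    _ = qf (Pmat vst θs * Lbig w * Pmat vst θs) v := (qf_mul_mul_of_isSymm Pmat_isSymm _ v).symm

/-- vᵀP𝓛Pv ≥ (1/2)(v*_min²/v*_max²) λ₂(L) ‖v‖_S² when all θ*_{k1} ∈ [0, π/2]. -/
theorem stmt10 (N : ℕ) [NeZero N] (hN : 2 ≤ N)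
    (w : Fin N → Fin N → ℝ)
    (hw_symm : ∀ j k, w j k = w k j) (hw_nonneg : ∀ j k, 0 ≤ w j k)
    (hw_irrefl : ∀ k, w k k = 0) (hconn : (wGraph w).Connected)
    (vst : Fin N → ℝ) (hvst : ∀ k, 0 < vst k)
    (θs : Fin N → ℝ) (hθ0 : θs 0 = 0)
    (hθhalf : ∀ k, θs k ∈ Set.Icc (0 : ℝ) (π / 2))
    (v : St N) :
    1 / 2 * ((⨅ k, vst k) ^ 2 / (⨆ k, vst k) ^ 2) * lambda2 (lapMat w)
        * infDist v (SsetR vst θs) ^ 2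
      ≤ qf (Pmat vst θs * Lbig w * Pmat vst θs) v := by
  have hlambda := lambda2_nonneg (lapMat_posSemidef hw_symm hw_nonneg hw_irrefl)
  have hvst_ne : vst ≠ 0 := fun h ↦ (hvst 0).ne' (congrFun h 0)
  refine le_trans ?_ (stmt10_general hw_symm hw_nonneg hw_irrefl hvst_ne θs v)
  gcongr
  exact half_mul_sq_iInf_div_sq_iSup_le_coherence_setpoint hvst hθhalf
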